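/- Let p be a prime, let F_p = Z/pZ, and let f(x_1,...,x_n) = a_1 x_1^k + ... + a_n x_n^k + g(x_1,...,x_n) be a polynomial over F_p, where k is a positive integer with k < p, a_1,...,a_n are nonzero elements of F_p, and g is a polynomial of total degree less than k. If n ≥ ⌈(p-1)/⌊(p-1)/k⌋⌉, then the equation f(x_1,...,x_n) = 0 has a solution with x_1,...,x_n ∈ F_p (indeed, the value set {f(x_1,...,x_n) : x_1,...,x_n ∈ F_p} is all of F_p). -/

import Mathlib

/-!
Let `h = ∑ aᵢ xᵢ ^ k` be the leading form of `f`, and suppose that `f` takes all its values on a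
grid `∏ Aᵢ` in a finite set `V`. Then `∏_{c ∈ V} (f - c)` vanishes on the grid, and its component
of degree `k * |V|` is `h ^ |V|`. The coefficient of `∏ xᵢ ^ (k * mᵢ)` in that power, where
`∑ mᵢ = |V|`, is a multinomial coefficient times a product of powers of the `aᵢ`, hence nonzero as
long as `|V|! ≠ 0`. If moreover `k * mᵢ < |Aᵢ|` for all `i`, this contradicts the combinatorial
Nullstellensatz; such `mᵢ` exist as soon as `|V| ≤ ∑ ⌊(|Aᵢ| - 1) / k⌋`. Over `𝔽_p`, with `Aᵢ = 𝔽_p`,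
this excludes every `|V| ≤ p - 1`.
-/

section

open MvPolynomial Finset
open scoped Nat

variable {σ R : Type*}

section HomogeneousComponent

variable [CommSemiring R]

lemma homogeneousComponent_add_mul {p q : MvPolynomial σ R} {m n : ℕ}
    (hp : p.totalDegree ≤ m) (hq : q.totalDegree ≤ n) :
    homogeneousComponent (m + n) (p * q) =
      homogeneousComponent m p * homogeneousComponent n q := by
  classical
  ext d
  by_cases hd : d.degree = m + n
  · rw [coeff_homogeneousComponent, if_pos hd, coeff_mul, coeff_mul]
    refine sum_congr rfl fun ⟨u, v⟩ huv ↦ ?_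
    have huv : u.degree + v.degree = m + n := by
      rw [← map_add, mem_antidiagonal.1 huv, hd]
    simp only [coeff_homogeneousComponent]
    rcases trichotomy_of_add_eq_add huv with ⟨hu, hv⟩ | hu | hv
    · rw [if_pos hu, if_pos hv]
    · have hv : q.totalDegree < v.degree := by lia
      rw [coeff_eq_zero_of_totalDegree_lt hv, ite_self, mul_zero, mul_zero]
    · have hu : p.totalDegree < u.degree := by lia
      rw [coeff_eq_zero_of_totalDegree_lt hu, ite_self, zero_mul, zero_mul]
  · rw [(homogeneousComponent_isHomogeneous _ _).coeff_eq_zero hd,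
      ((homogeneousComponent_isHomogeneous m p).mul
        (homogeneousComponent_isHomogeneous n q)).coeff_eq_zero hd]

lemma homogeneousComponent_sum_prod {ι : Type*} (s : Finset ι) {f : ι → MvPolynomial σ R}
    {n : ι → ℕ} (hf : ∀ i ∈ s, (f i).totalDegree ≤ n i) :
    homogeneousComponent (∑ i ∈ s, n i) (∏ i ∈ s, f i) =
      ∏ i ∈ s, homogeneousComponent (n i) (f i) := by
  induction s using Finset.cons_induction with
  | empty => simp
  | cons i s hi ih =>
    have hs : ∀ j ∈ s, (f j).totalDegree ≤ n j := fun j hj ↦ hf j (mem_cons_of_mem hj)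
    have hprod : (∏ j ∈ s, f j).totalDegree ≤ ∑ j ∈ s, n j :=
      (totalDegree_finsetProd s f).trans (sum_le_sum hs)
    rw [sum_cons, prod_cons, prod_cons,
      homogeneousComponent_add_mul (hf i (mem_cons_self i s)) hprod, ih hs]

end HomogeneousComponent

theorem coeff_homogeneousComponent_pow_card_eq_zero [CommRing R] [IsDomain R] [Finite σ]
    {f : MvPolynomial σ R} {d : ℕ} (hd : 0 < d) (hf : f.totalDegree ≤ d)
    {A : σ → Finset R} {V : Finset R} (hV : ∀ x : σ → R, (∀ i, x i ∈ A i) → eval x f ∈ V)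
    {m : σ →₀ ℕ} (hm : ∀ i, m i < #(A i)) :
    coeff m (homogeneousComponent d f ^ #V) = 0 := by
  by_contra hcoeff
  set P : MvPolynomial σ R := ∏ c ∈ V, (f - C c) with hP
  have hfactor : ∀ c ∈ V, (f - C c).totalDegree ≤ d := fun c _ ↦
    (totalDegree_sub_C_le f c).trans hf
  have hleading : homogeneousComponent (∑ _c ∈ V, d) P = homogeneousComponent d f ^ #V := by
    have hC (c : R) : homogeneousComponent d (C c : MvPolynomial σ R) = 0 :=
      homogeneousComponent_eq_zero _ _ (by rwa [totalDegree_C])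
    simp only [hP, homogeneousComponent_sum_prod V hfactor, map_sub, hC, sub_zero, prod_const]
  rw [← hleading, coeff_homogeneousComponent, ite_eq_right_iff, Classical.not_imp] at hcoeff
  obtain ⟨hmdeg, hPcoeff⟩ := hcoeff
  have hPdeg : P.totalDegree = m.degree := by
    refine le_antisymm ?_ (le_totalDegree (mem_support_iff.2 hPcoeff))
    rw [hmdeg]
    exact (totalDegree_finsetProd V _).trans (sum_le_sum hfactor)
  obtain ⟨x, hxA, hx⟩ :=
    combinatorial_nullstellensatz_exists_eval_nonzero P m hPcoeff hPdeg A hm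
  refine hx ?_
  rw [hP, eval_prod]
  exact prod_eq_zero (hV x hxA) (by rw [map_sub, eval_C, sub_self])

section DiagonalForm

lemma multinomial_dvd_factorial_degree (m : σ →₀ ℕ) : m.multinomial ∣ m.degree ! :=
  Dvd.intro_left _ (Nat.multinomial_spec m.support m)

variable [Fintype σ]

lemma isHomogeneous_sum_C_mul_X_pow [CommSemiring R] (a : σ → R) (k : ℕ) :
    (∑ i, C (a i) * X i ^ k : MvPolynomial σ R).IsHomogeneous k :=
  IsHomogeneous.sum _ _ _ fun i _ ↦ isHomogeneous_C_mul_X_pow (a i) i k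

lemma coeff_smul_sum_C_mul_X_pow_pow [CommSemiring R] (a : σ → R) {k : ℕ} (hk : k ≠ 0)
    (m : σ →₀ ℕ) :
    coeff (k • m) ((∑ i, C (a i) * X i ^ k : MvPolynomial σ R) ^ m.degree) =
      m.multinomial * m.prod fun i e ↦ a i ^ e := by
  have hexpand : (∑ i, C (a i) * X i ^ k : MvPolynomial σ R) = expand k (∑ i, a i • X i) := by
    simp [smul_eq_C_mul]
  rw [hexpand, ← map_pow, coeff_expand_smul k hk, coeff_linearCombination_X_pow_of_fintype]
  exact if_pos rfl

lemma coeff_smul_sum_C_mul_X_pow_pow_ne_zero [CommSemiring R] [IsDomain R] {a : σ → R}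
    (ha : ∀ i, a i ≠ 0) {k : ℕ} (hk : k ≠ 0) {m : σ →₀ ℕ} (hm : (m.degree ! : R) ≠ 0) :
    coeff (k • m) ((∑ i, C (a i) * X i ^ k : MvPolynomial σ R) ^ m.degree) ≠ 0 := by
  rw [coeff_smul_sum_C_mul_X_pow_pow a hk]
  have hmultinomial : (m.multinomial : R) ≠ 0 :=
    ne_zero_of_dvd_ne_zero hm (Nat.cast_dvd_cast (multinomial_dvd_factorial_degree m))
  exact mul_ne_zero hmultinomial (prod_ne_zero_iff.2 fun i _ ↦ pow_ne_zero _ (ha i))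

theorem stmt4_general [CommRing R] [IsDomain R] [DecidableEq σ] [DecidableEq R]
    {k : ℕ} {a : σ → R} (ha : ∀ i, a i ≠ 0) {g f : MvPolynomial σ R} (hg : g.totalDegree < k)
    (hf : f = (∑ i, C (a i) * X i ^ k) + g)
    {A : σ → Finset R} (hA : ∀ i, (A i).Nonempty) {N : ℕ} (hN : (N ! : R) ≠ 0)
    (hNA : N ≤ ∑ i, (#(A i) - 1) / k) :
    N < #((Fintype.piFinset A).image fun x ↦ eval x f) := by
  set V := (Fintype.piFinset A).image fun x ↦ eval x f
  by_contra! hVN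
  have hk : 0 < k := hg.pos
  have hhom := isHomogeneous_sum_C_mul_X_pow a k
  have hfdeg : f.totalDegree ≤ k := by
    rw [hf]
    exact (totalDegree_add _ _).trans (max_le hhom.totalDegree_le hg.le)
  have hleading : homogeneousComponent k f = ∑ i, C (a i) * X i ^ k := by
    rw [hf, map_add, homogeneousComponent_eq_self hhom,
      homogeneousComponent_eq_zero _ _ hg, add_zero]
  obtain ⟨m, hmA, hmV⟩ : ∃ m ≤ Finsupp.equivFunOnFinite.symm fun i ↦ (#(A i) - 1) / k,
      m.degree = #V :=
    Finsupp.exists_le_degree_eq _ _ (by simpa [Finsupp.degree_eq_sum] using hVN.trans hNA)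
  have hfactorial : (m.degree ! : R) ≠ 0 :=
    ne_zero_of_dvd_ne_zero hN (Nat.cast_dvd_cast (Nat.factorial_dvd_factorial (hmV ▸ hVN)))
  refine coeff_smul_sum_C_mul_X_pow_pow_ne_zero ha hk.ne' hfactorial ?_
  rw [← hleading, hmV]
  refine coeff_homogeneousComponent_pow_card_eq_zero (A := A) hk hfdeg (fun x hx ↦ ?_) fun i ↦ ?_
  · exact mem_image_of_mem _ (Fintype.mem_piFinset.2 hx)
  · have hmi : k * m i ≤ #(A i) - 1 := (Nat.mul_le_mul_left k (hmA i)).trans (Nat.mul_div_le _ k)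
    have hAi : 0 < #(A i) := (hA i).card_pos
    rw [Finsupp.smul_apply, smul_eq_mul]
    lia

end DiagonalForm

theorem surjective_eval_of_ceilDiv_le_card {p : ℕ} [Fact p.Prime] [Fintype σ] {k : ℕ}
    (hkp : k < p) {a : σ → ZMod p} (ha : ∀ i, a i ≠ 0) {g f : MvPolynomial σ (ZMod p)}
    (hg : g.totalDegree < k) (hf : f = (∑ i, C (a i) * X i ^ k) + g)
    (hσ : (p - 1) ⌈/⌉ ((p - 1) / k) ≤ Fintype.card σ) :
    Function.Surjective fun x ↦ eval x f := by
  classical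
  have hq : 0 < (p - 1) / k := Nat.div_pos (Nat.le_sub_one_of_lt hkp) hg.pos
  have hsum : p - 1 ≤ ∑ _i : σ, (#(univ : Finset (ZMod p)) - 1) / k := by
    simpa [ZMod.card, mul_comm] using (ceilDiv_le_iff_le_smul hq).1 hσ
  have hfactorial : ((p - 1)! : ZMod p) ≠ 0 := by
    rw [ZMod.wilsons_lemma]
    exact neg_ne_zero.2 one_ne_zero
  have hcard := stmt4_general ha hg hf (fun _ ↦ univ_nonempty) hfactorial hsum
  rw [Fintype.piFinset_univ] at hcard
  have himage : univ.image (fun x ↦ eval x f) = univ :=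
    eq_univ_of_card _ <| (card_le_univ _).antisymm <| by
      rw [ZMod.card]
      exact Nat.le_of_pred_lt hcard
  intro y
  obtain ⟨x, -, hx⟩ := mem_image.1 (eq_univ_iff_forall.1 himage y)
  exact ⟨x, hx⟩

end

theorem stmt4 (p : ℕ) (hp : p.Prime) (n k : ℕ) (hk : 0 < k) (hkp : k < p)
    (a : Fin n → ZMod p) (ha : ∀ i, a i ≠ 0)
    (g f : MvPolynomial (Fin n) (ZMod p)) (hg : g.totalDegree < k)
    (hf : f = (∑ i, MvPolynomial.C (a i) * MvPolynomial.X i ^ k) + g)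
    (hn : (p - 1) ⌈/⌉ ((p - 1) / k) ≤ n) :
    (∃ x : Fin n → ZMod p, MvPolynomial.eval x f = 0) ∧
      ({y | ∃ x : Fin n → ZMod p, MvPolynomial.eval x f = y} : Set (ZMod p)) = Set.univ := by
  have : Fact p.Prime := ⟨hp⟩
  have hsurj := surjective_eval_of_ceilDiv_le_card hkp ha hg hf (by rwa [Fintype.card_fin])
  exact ⟨hsurj 0, hsurj.range_eq⟩
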